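/- There exist n ≥ 1 and a monotone map F : (Fin n → Bool) → (Fin n → Bool) (pointwise order) such that F admits no monotone sequentialization: for every permutation π of Fin n and every family (G_i)_{i : Fin n} of monotone coordinate-update maps on Fin n → Bool, the composition G_{π(n-1)} ∘ ⋯ ∘ G_{π(1)} ∘ G_{π(0)} is not equal to F. -/

import Mathlib

/-- The SDS map `G_{π(n-1)} ∘ ⋯ ∘ G_{π(1)} ∘ G_{π(0)}`: vertex `π 0` is updated first. -/
def seqComp {n : ℕ} (G : Fin n → (Fin n → Bool) → (Fin n → Bool))
    (π : Equiv.Perm (Fin n)) (X : Fin n → Bool) : Fin n → Bool :=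
  (List.finRange n).foldl (fun Y i => G (π i) Y) X

/-!
Suppose a composition of coordinate updates, each coordinate being updated once, is an injective
map `F` none of whose components `F · i` depends on the `i`-th coordinate. If `a` is updated first,
the value it receives is final, hence does not depend on the old value of `a`; as the other
coordinates have not changed, the old value of `a` is lost, contradicting injectivity. The cyclic
shift of at least two coordinates is a monotone map of this kind.
-/

section CoordinateUpdates

variable {ι α : Type*}

/-- `g` is a coordinate-update map at `i`: it changes at most the `i`-th coordinate of a state. -/
def IsUpdateAt (i : ι) (g : (ι → α) → (ι → α)) : Prop :=
  ∀ X j, j ≠ i → g X j = X j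

theorem foldl_apply_of_notMem {G : ι → (ι → α) → (ι → α)} (hG : ∀ i, IsUpdateAt i (G i))
    {L : List ι} {i : ι} (hi : i ∉ L) (X : ι → α) :
    L.foldl (fun Y k => G k Y) X i = X i := by
  induction L generalizing X with
  | nil => rfl
  | cons k L ih =>
    rw [List.mem_cons, not_or] at hi
    exact (ih hi.2 (G k X)).trans (hG k X i hi.1)

theorem IsUpdateAt.not_injective [Nontrivial α] {i : ι} {g : (ι → α) → (ι → α)}
    (hg : IsUpdateAt i g) (hdep : DependsOn (fun X => g X i) {i}ᶜ) : ¬ g.Injective := by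
  classical
  intro hinj
  obtain ⟨x, y, hxy⟩ := exists_pair_ne α
  let X : α → ι → α := fun z => Function.update (fun _ => x) i z
  have hX_off : ∀ j, j ≠ i → X x j = X y j := fun j hj => by simp [X, hj]
  have hg_eq : g (X x) = g (X y) := by
    funext j
    obtain rfl | hj := eq_or_ne j i
    · exact hdep hX_off
    · rw [hg _ j hj, hg _ j hj, hX_off j hj]
  exact hxy (Function.update_injective _ i (hinj hg_eq))

theorem not_injective_foldl_cons [Nontrivial α] {G : ι → (ι → α) → (ι → α)}
    (hG : ∀ i, IsUpdateAt i (G i)) {a : ι} {L : List ι} (ha : a ∉ L)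
    (hdep : DependsOn (fun X => (a :: L).foldl (fun Y k => G k Y) X a) {a}ᶜ) :
    ¬ Function.Injective ((a :: L).foldl (fun Y k => G k Y)) := by
  intro hinj
  have hfirst : DependsOn (fun X => G a X a) {a}ᶜ := by
    simpa only [List.foldl_cons, foldl_apply_of_notMem hG ha] using hdep
  exact (hG a).not_injective hfirst (hinj.of_comp (f := L.foldl fun Y k => G k Y))

end CoordinateUpdates

theorem seqComp_eq_foldl_map {n : ℕ} (G : Fin n → (Fin n → Bool) → (Fin n → Bool))
    (π : Equiv.Perm (Fin n)) :
    seqComp G π = ((List.finRange n).map π).foldl fun Y i => G i Y := by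
  funext X
  rw [seqComp, List.foldl_map]

theorem seqComp_ne_of_injective_of_dependsOn_compl {n : ℕ} [NeZero n]
    {F : (Fin n → Bool) → (Fin n → Bool)} (hF : F.Injective)
    (hdep : ∀ i, DependsOn (fun X => F X i) {i}ᶜ) (π : Equiv.Perm (Fin n))
    {G : Fin n → (Fin n → Bool) → (Fin n → Bool)} (hG : ∀ i, IsUpdateAt i (G i)) :
    seqComp G π ≠ F := by
  rintro rfl
  have hnodup : ((List.finRange n).map π).Nodup := (List.nodup_finRange n).map π.injective
  rw [seqComp_eq_foldl_map] at hF hdep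
  cases horder : (List.finRange n).map π with
  | nil => simp [NeZero.ne n] at horder
  | cons a L =>
    rw [horder] at hF hdep hnodup
    exact not_injective_foldl_cons hG (List.nodup_cons.mp hnodup).1 (hdep a) hF

theorem seqComp_ne_comp_perm {n : ℕ} [NeZero n] {σ : Equiv.Perm (Fin n)} (hσ : ∀ i, σ i ≠ i)
    (π : Equiv.Perm (Fin n)) {G : Fin n → (Fin n → Bool) → (Fin n → Bool)}
    (hG : ∀ i, IsUpdateAt i (G i)) : seqComp G π ≠ fun X => X ∘ σ :=
  seqComp_ne_of_injective_of_dependsOn_compl σ.surjective.injective_comp_right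
    (fun i _ _ hXY => hXY (σ i) (hσ i)) π hG

theorem finRotate_apply_ne_self {n : ℕ} (hn : 2 ≤ n) (i : Fin n) : finRotate n i ≠ i :=
  Equiv.Perm.mem_support.mp (support_finRotate_of_le hn ▸ Finset.mem_univ i)

theorem stmt_16_general {n : ℕ} (hn : 2 ≤ n) :
    ∃ F : (Fin n → Bool) → (Fin n → Bool), Monotone F ∧
      ∀ (π : Equiv.Perm (Fin n)) (G : Fin n → (Fin n → Bool) → (Fin n → Bool)),
        (∀ i, IsUpdateAt i (G i)) → seqComp G π ≠ F :=
  have : NeZero n := ⟨by lia⟩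
  ⟨fun X => X ∘ finRotate n, fun _ _ hXY i => hXY (finRotate n i),
    fun π _ hG => seqComp_ne_comp_perm (finRotate_apply_ne_self hn) π hG⟩

theorem stmt_16 :
    ∃ (n : ℕ), 1 ≤ n ∧ ∃ F : (Fin n → Bool) → (Fin n → Bool), Monotone F ∧
      ∀ (π : Equiv.Perm (Fin n)) (G : Fin n → (Fin n → Bool) → (Fin n → Bool)),
        (∀ (i : Fin n) (X : Fin n → Bool) (j : Fin n), j ≠ i → G i X j = X j) →
        (∀ i : Fin n, Monotone (G i)) →
        seqComp G π ≠ F := by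
  obtain ⟨F, hF, hseq⟩ := stmt_16_general le_rfl
  exact ⟨2, one_le_two, F, hF, fun π G hG _ => hseq π G hG⟩
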